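/- For λ∈ba(𝒜) the following properties are equivalent: (i) the convex hull of every bounded subset of L⁰(λ) is bounded in L⁰(λ); (ii) λ is strongly discontinuous; (iii) L⁰(λ), with the topology induced by the metric d, is a locally convex topological vector space. -/

import Mathlib

open Set Filter Topology

namespace FA

/-- An algebra of subsets of `Ω`. -/
structure SetAlg (Ω : Type*) where
  sets : Set (Set Ω)
  empty_mem : ∅ ∈ sets
  compl_mem : ∀ ⦃A⦄, A ∈ sets → Aᶜ ∈ sets
  union_mem : ∀ ⦃A B⦄, A ∈ sets → B ∈ sets → A ∪ B ∈ sets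

/-- A bounded, finitely additive real-valued set function on the algebra `𝒜`,
i.e. an element of `ba(𝒜)`. -/
structure BAMeasure {Ω : Type*} (𝒜 : SetAlg Ω) where
  toFun : Set Ω → ℝ
  map_empty : toFun ∅ = 0
  additive : ∀ ⦃A B : Set Ω⦄, A ∈ 𝒜.sets → B ∈ 𝒜.sets → Disjoint A B →
      toFun (A ∪ B) = toFun A + toFun B
  bounded : ∃ M : ℝ, ∀ A ∈ 𝒜.sets, |toFun A| ≤ M

variable {Ω : Type*} {𝒜 : SetAlg Ω}

/-- Total variation `|λ|(A) = λ⁺(A) + λ⁻(A)`. -/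
noncomputable def var (lam : BAMeasure 𝒜) (A : Set Ω) : ℝ :=
  sSup {x | ∃ B ∈ 𝒜.sets, B ⊆ A ∧ x = lam.toFun B} +
  sSup {x | ∃ B ∈ 𝒜.sets, B ⊆ A ∧ x = -lam.toFun B}

/-- The outer measure `|λ|*(B) = inf {|λ|(A) : A ∈ 𝒜, B ⊆ A}`. -/
noncomputable def outer (lam : BAMeasure 𝒜) (B : Set Ω) : ℝ :=
  sInf {x | ∃ A ∈ 𝒜.sets, B ⊆ A ∧ x = var lam A}

/-- `𝒜`-simple functions. -/
def IsSimple (𝒜 : SetAlg Ω) (f : Ω → ℝ) : Prop :=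
  (Set.range f).Finite ∧ ∀ r : ℝ, f ⁻¹' {r} ∈ 𝒜.sets

/-- `λ`-convergence: `(f n)` converges to `g` in `λ`-measure. -/
def LConv (lam : BAMeasure 𝒜) (f : ℕ → Ω → ℝ) (g : Ω → ℝ) : Prop :=
  ∀ c > (0:ℝ), Tendsto (fun n => outer lam {ω | c < |f n ω - g ω|}) atTop (𝓝 0)

/-- `λ`-Cauchy sequences. -/
def LCauchy (lam : BAMeasure 𝒜) (f : ℕ → Ω → ℝ) : Prop :=
  ∀ c > (0:ℝ), ∀ ε > (0:ℝ), ∃ N : ℕ, ∀ p q : ℕ,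
    outer lam {ω | c < |f (N + p) ω - f (N + q) ω|} < ε

/-- `L⁰(λ)`: `λ`-limits of sequences of `𝒜`-simple functions. -/
def L0 (lam : BAMeasure 𝒜) : Set (Ω → ℝ) :=
  {f | ∃ s : ℕ → Ω → ℝ, (∀ n, IsSimple 𝒜 (s n)) ∧ LConv lam s f}

/-- The metric of `L⁰(λ)`: `d(f,g) = inf {c + |λ|*(|f-g| ≥ c) : c > 0}`. -/
noncomputable def dL0 (lam : BAMeasure 𝒜) (f g : Ω → ℝ) : ℝ :=
  sInf {x | ∃ c > (0:ℝ), x = c + outer lam {ω | c ≤ |f ω - g ω|}}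

/-- A set `K` is bounded in `L⁰(λ)` if `lim_{c→∞} sup_{f∈K} |λ|*(|f|>c) = 0`. -/
def BddL0 (lam : BAMeasure 𝒜) (K : Set (Ω → ℝ)) : Prop :=
  ∀ ε > (0:ℝ), ∃ c₀ : ℝ, ∀ c ≥ c₀, ∀ f ∈ K, outer lam {ω | c < |f ω|} < ε

/-- The nonnegative elements of `L⁰(λ)`. -/
def L0pos (lam : BAMeasure 𝒜) : Set (Ω → ℝ) := {f ∈ L0 lam | ∀ ω, 0 ≤ f ω}

/-- The elementary integral of a simple function with respect to a set function. -/
noncomputable def simpleIntegral (m : Set Ω → ℝ) (f : Ω → ℝ) : ℝ :=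
  ∑ᶠ r : ℝ, r * m (f ⁻¹' {r})

/-- Dunford–Schwartz integrability: there is a sequence of simple functions converging to `f`
in `λ`-measure which is Cauchy in mean. -/
def MemL1 (lam : BAMeasure 𝒜) (f : Ω → ℝ) : Prop :=
  ∃ s : ℕ → Ω → ℝ, (∀ n, IsSimple 𝒜 (s n)) ∧ LConv lam s f ∧
    ∀ ε > (0:ℝ), ∃ N : ℕ, ∀ m ≥ N, ∀ n ≥ N,
      simpleIntegral (var lam) (fun ω => |s m ω - s n ω|) < ε

/-- `L¹(λ)`. -/
def L1 (lam : BAMeasure 𝒜) : Set (Ω → ℝ) := {f | MemL1 lam f}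

open scoped Classical in
/-- The Dunford–Schwartz integral `∫ f dλ`. -/
noncomputable def integral (lam : BAMeasure 𝒜) (f : Ω → ℝ) : ℝ :=
  if h : MemL1 lam f then
    limUnder atTop (fun n => simpleIntegral lam.toFun (h.choose n))
  else 0

open scoped Classical in
/-- The `L¹(λ)` seminorm `∫ |f| d|λ|`. -/
noncomputable def l1Norm (lam : BAMeasure 𝒜) (f : Ω → ℝ) : ℝ :=
  if h : MemL1 lam f then
    limUnder atTop (fun n => simpleIntegral (var lam) (fun ω => |h.choose n ω|))
  else 0

/-- A set is bounded in `L¹(μ)` if the integrals `∫|f| d|μ|` are uniformly bounded. -/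
def BddL1 (mu : BAMeasure 𝒜) (K : Set (Ω → ℝ)) : Prop :=
  ∃ M : ℝ, ∀ f ∈ K, l1Norm mu f ≤ M

/-- Finitely additive probability measures. -/
def IsFAProb (mu : BAMeasure 𝒜) : Prop :=
  mu.toFun Set.univ = 1 ∧ ∀ A ∈ 𝒜.sets, 0 ≤ mu.toFun A

/-- `μ ∈ 𝔓_*(λ)`: a finitely additive probability with `|μ| ≤ c |λ|` and the same null
sets as `λ`. -/
def PStar (lam mu : BAMeasure 𝒜) : Prop :=
  IsFAProb mu ∧ (∃ c : ℝ, 0 ≤ c ∧ ∀ A ∈ 𝒜.sets, var mu A ≤ c * var lam A) ∧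
  ∀ A ∈ 𝒜.sets, (mu.toFun A = 0 ↔ var lam A = 0)

/-- `μ ∈ 𝔓_*(λ; K)`. -/
def PStarWith (lam : BAMeasure 𝒜) (K : Set (Ω → ℝ)) (mu : BAMeasure 𝒜) : Prop :=
  PStar lam mu ∧ K ⊆ L1 mu ∧ BddL1 mu K

/-- `f` is a `λ`-a.s. lower bound of `K`. -/
def ASLowerBound (lam : BAMeasure 𝒜) (f : Ω → ℝ) (K : Set (Ω → ℝ)) : Prop :=
  ∀ c > (0:ℝ), ∀ k ∈ K, outer lam {ω | k ω < f ω - c} = 0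

/-- Absolute continuity `μ ≪ λ` for bounded finitely additive set functions. -/
def AbsCont (mu lam : BAMeasure 𝒜) : Prop :=
  ∀ ε > (0:ℝ), ∃ δ > (0:ℝ), ∀ A ∈ 𝒜.sets, var lam A < δ → var mu A < ε

/-- `λ ∈ ba₀(𝒜)`: the range of `λ` is finite. -/
def FiniteRange (lam : BAMeasure 𝒜) : Prop := (lam.toFun '' 𝒜.sets).Finite

/-- `μ ∈ ba₀(λ)`. -/
def BA0rel (lam mu : BAMeasure 𝒜) : Prop := FiniteRange mu ∧ AbsCont mu lam

/-- Strong continuity: arbitrarily fine finite partitions. -/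
def StronglyContinuous (lam : BAMeasure 𝒜) : Prop :=
  ∀ ε > (0:ℝ), ∃ (N : ℕ) (A : Fin N → Set Ω), (∀ n, A n ∈ 𝒜.sets) ∧
    Pairwise (Function.onFun Disjoint A) ∧ (⋃ n, A n) = Set.univ ∧
    ∀ n, var lam (A n) < ε

/-- Orthogonality of bounded finitely additive set functions. -/
def Orthogonal (mu nu : BAMeasure 𝒜) : Prop :=
  ∀ ε > (0:ℝ), ∃ A ∈ 𝒜.sets, var mu A < ε ∧ var nu Aᶜ < ε

/-- Strong discontinuity: orthogonal to every strongly continuous element of `ba(𝒜)`. -/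
def StronglyDiscontinuous (mu : BAMeasure 𝒜) : Prop :=
  ∀ nu : BAMeasure 𝒜, StronglyContinuous nu → Orthogonal mu nu

/-- Countable additivity of `λ` on the algebra `𝒜`. -/
def CountablyAdditive (lam : BAMeasure 𝒜) : Prop :=
  ∀ A : ℕ → Set Ω, (∀ n, A n ∈ 𝒜.sets) → Pairwise (Function.onFun Disjoint A) →
    (⋃ n, A n) ∈ 𝒜.sets → HasSum (fun n => lam.toFun (A n)) (lam.toFun (⋃ n, A n))

/-- `𝒜` is a σ-algebra. -/
def IsSigmaAlg (𝒜 : SetAlg Ω) : Prop :=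
  ∀ A : ℕ → Set Ω, (∀ n, A n ∈ 𝒜.sets) → (⋃ n, A n) ∈ 𝒜.sets

/-- Linearity of a functional on `L⁰(λ)`. -/
def LinearOnL0 (lam : BAMeasure 𝒜) (φ : (Ω → ℝ) → ℝ) : Prop :=
  (∀ f ∈ L0 lam, ∀ g ∈ L0 lam, φ (f + g) = φ f + φ g) ∧
  (∀ a : ℝ, ∀ f ∈ L0 lam, φ (a • f) = a * φ f)

/-- Continuity of a functional on `L⁰(λ)` with respect to the metric `d`. -/
def ContinuousOnL0 (lam : BAMeasure 𝒜) (φ : (Ω → ℝ) → ℝ) : Prop :=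
  ∀ f ∈ L0 lam, ∀ ε > (0:ℝ), ∃ δ > (0:ℝ), ∀ g ∈ L0 lam, dL0 lam g f < δ → |φ g - φ f| < ε


/-- `L⁰(λ)` is a locally convex topological vector space: scalar multiplication and addition
are continuous for the metric `d`, and there is a base of convex neighborhoods of the
origin. -/
def IsLCTVS (lam : BAMeasure 𝒜) : Prop :=
  (∀ f ∈ L0 lam, ∀ a : ℝ, ∀ ε > (0:ℝ), ∃ δ > (0:ℝ), ∀ g ∈ L0 lam, ∀ b : ℝ,
      dL0 lam g f < δ → |b - a| < δ → dL0 lam (b • g) (a • f) < ε) ∧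
  (∀ f ∈ L0 lam, ∀ g ∈ L0 lam, ∀ ε > (0:ℝ), ∃ δ > (0:ℝ),
      ∀ f' ∈ L0 lam, ∀ g' ∈ L0 lam,
      dL0 lam f' f < δ → dL0 lam g' g < δ → dL0 lam (f' + g') (f + g) < ε) ∧
  (∀ ε > (0:ℝ), ∃ C : Set (Ω → ℝ), C ⊆ L0 lam ∧ Convex ℝ C ∧
      (∃ δ > (0:ℝ), {f ∈ L0 lam | dL0 lam f 0 < δ} ⊆ C) ∧
      C ⊆ {f ∈ L0 lam | dL0 lam f 0 < ε})

theorem SetAlg.inter_mem (h𝒜 : SetAlg Ω) {A B : Set Ω} (hA : A ∈ h𝒜.sets) (hB : B ∈ h𝒜.sets) :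
    A ∩ B ∈ h𝒜.sets := by
  have := h𝒜.compl_mem (h𝒜.union_mem (h𝒜.compl_mem hA) (h𝒜.compl_mem hB))
  simpa [Set.compl_union] using this

theorem SetAlg.diff_mem (h𝒜 : SetAlg Ω) {A B : Set Ω} (hA : A ∈ h𝒜.sets) (hB : B ∈ h𝒜.sets) :
    A \ B ∈ h𝒜.sets := h𝒜.inter_mem hA (h𝒜.compl_mem hB)

theorem SetAlg.univ_mem (h𝒜 : SetAlg Ω) : Set.univ ∈ h𝒜.sets := by
  simpa using h𝒜.compl_mem h𝒜.empty_mem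

theorem SetAlg.biUnion_mem (h𝒜 : SetAlg Ω) {ι : Type*} (s : Finset ι) (A : ι → Set Ω)
    (h : ∀ i ∈ s, A i ∈ h𝒜.sets) : (⋃ i ∈ s, A i) ∈ h𝒜.sets := by
  classical
  induction s using Finset.induction_on with
  | empty => simpa using h𝒜.empty_mem
  | insert a s ha ih =>
    rw [Finset.set_biUnion_insert]
    exact h𝒜.union_mem (h a (by simp)) (ih fun i hi => h i (by simp [hi]))

/-- Supremum of `u` over members of `I` inside `A`. -/
noncomputable def supOn (u : Set Ω → ℝ) (I : Set (Set Ω)) (A : Set Ω) : ℝ :=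
  sSup {x | ∃ B ∈ I, B ⊆ A ∧ x = u B}

theorem le_supOn {u : Set Ω → ℝ} {I : Set (Set Ω)} {M : ℝ} (hM : ∀ B ∈ I, u B ≤ M)
    {A B : Set Ω} (hB : B ∈ I) (hBA : B ⊆ A) : u B ≤ supOn u I A :=
  le_csSup ⟨M, by rintro x ⟨B, hB, -, rfl⟩; exact hM B hB⟩ ⟨B, hB, hBA, rfl⟩

theorem supOn_le {u : Set Ω → ℝ} {I : Set (Set Ω)} (h0 : ∅ ∈ I)
    {A : Set Ω} {r : ℝ} (h : ∀ B ∈ I, B ⊆ A → u B ≤ r) : supOn u I A ≤ r :=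
  csSup_le ⟨_, ∅, h0, Set.empty_subset _, rfl⟩ (by rintro x ⟨B, hB, hBA, rfl⟩; exact h B hB hBA)

theorem supOn_additive {u : Set Ω → ℝ} {I : Set (Set Ω)} {M : ℝ} (hM : ∀ B ∈ I, u B ≤ M)
    (h0 : ∅ ∈ I) (hI : I ⊆ 𝒜.sets) (hinter : ∀ B ∈ I, ∀ C ∈ 𝒜.sets, B ∩ C ∈ I)
    (hunion : ∀ B ∈ I, ∀ C ∈ I, B ∪ C ∈ I)
    (hadd : ∀ ⦃A B : Set Ω⦄, A ∈ 𝒜.sets → B ∈ 𝒜.sets → Disjoint A B → u (A ∪ B) = u A + u B)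
    {A B : Set Ω} (hA : A ∈ 𝒜.sets) (hB : B ∈ 𝒜.sets) (hd : Disjoint A B) :
    supOn u I (A ∪ B) = supOn u I A + supOn u I B := by
  apply le_antisymm
  · apply supOn_le h0
    intro C hC hCs
    have e : C = (C ∩ A) ∪ (C ∩ B) := by
      rw [← Set.inter_union_distrib_left, Set.inter_eq_left.2 hCs]
    have h1 := hadd (hI (hinter C hC A hA)) (hI (hinter C hC B hB))
      (hd.mono Set.inter_subset_right Set.inter_subset_right)
    rw [← e] at h1
    rw [h1]
    exact add_le_add (le_supOn hM (hinter C hC A hA) Set.inter_subset_right)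
      (le_supOn hM (hinter C hC B hB) Set.inter_subset_right)
  · rw [← le_sub_iff_add_le]
    apply supOn_le h0
    intro C hC hCA
    rw [le_sub_comm]
    apply supOn_le h0
    intro D hD hDB
    have h1 := hadd (hI hC) (hI hD) (hd.mono hCA hDB)
    have h2 := le_supOn hM (hunion C hC D hD) (Set.union_subset_union hCA hDB)
    linarith

theorem var_eq (lam : BAMeasure 𝒜) (A : Set Ω) :
    var lam A = supOn lam.toFun 𝒜.sets A + supOn (fun B => -lam.toFun B) 𝒜.sets A := rfl

theorem var_nonneg (lam : BAMeasure 𝒜) (A : Set Ω) : 0 ≤ var lam A := by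
  obtain ⟨M, hM⟩ := lam.bounded
  rw [var_eq]
  have h1 := le_supOn (u := lam.toFun) (I := 𝒜.sets) (M := M) (A := A)
    (fun B hB => (abs_le.1 (hM B hB)).2) 𝒜.empty_mem (Set.empty_subset _)
  have h2 := le_supOn (u := fun B => -lam.toFun B) (I := 𝒜.sets) (M := M) (A := A)
    (fun B hB => neg_le.1 (abs_le.1 (hM B hB)).1) 𝒜.empty_mem (Set.empty_subset _)
  simp only [lam.map_empty] at h1 h2
  linarith

theorem var_additive (lam : BAMeasure 𝒜) {A B : Set Ω} (hA : A ∈ 𝒜.sets) (hB : B ∈ 𝒜.sets)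
    (hd : Disjoint A B) : var lam (A ∪ B) = var lam A + var lam B := by
  obtain ⟨M, hM⟩ := lam.bounded
  simp only [var_eq]
  rw [supOn_additive (u := lam.toFun) (I := 𝒜.sets) (M := M)
    (fun B hB => (abs_le.1 (hM B hB)).2) 𝒜.empty_mem subset_rfl
    (fun B hB C hC => 𝒜.inter_mem hB hC) (fun B hB C hC => 𝒜.union_mem hB hC)
    lam.additive hA hB hd,
   supOn_additive (u := fun B => -lam.toFun B) (I := 𝒜.sets) (M := M)
    (fun B hB => neg_le.1 (abs_le.1 (hM B hB)).1) 𝒜.empty_mem subset_rfl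
    (fun B hB C hC => 𝒜.inter_mem hB hC) (fun B hB C hC => 𝒜.union_mem hB hC)
    (fun A B hA hB hd => by rw [lam.additive hA hB hd]; ring) hA hB hd]
  ring

theorem var_mono (lam : BAMeasure 𝒜) {A B : Set Ω} (hA : A ∈ 𝒜.sets) (hB : B ∈ 𝒜.sets)
    (h : A ⊆ B) : var lam A ≤ var lam B := by
  have h1 := var_additive lam hA (𝒜.diff_mem hB hA) Set.disjoint_sdiff_right
  rw [Set.union_diff_cancel h] at h1
  linarith [var_nonneg lam (B \ A)]

theorem var_union_le (lam : BAMeasure 𝒜) {A B : Set Ω} (hA : A ∈ 𝒜.sets) (hB : B ∈ 𝒜.sets) :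
    var lam (A ∪ B) ≤ var lam A + var lam B := by
  have h1 := var_additive lam hA (𝒜.diff_mem hB hA) Set.disjoint_sdiff_right
  rw [Set.union_diff_self] at h1
  linarith [var_mono lam (𝒜.diff_mem hB hA) hB Set.diff_subset]

theorem var_empty (lam : BAMeasure 𝒜) : var lam ∅ = 0 := by
  have := var_additive lam 𝒜.empty_mem 𝒜.empty_mem (Set.disjoint_empty _)
  simp at this
  exact this

theorem var_biUnion (lam : BAMeasure 𝒜) {ι : Type*} (s : Finset ι) (A : ι → Set Ω)
    (h : ∀ i, A i ∈ 𝒜.sets) (hd : Pairwise (Function.onFun Disjoint A)) :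
    var lam (⋃ i ∈ s, A i) = ∑ i ∈ s, var lam (A i) := by
  classical
  induction s using Finset.induction_on with
  | empty => simp [var_empty]
  | insert a s ha ih =>
    rw [Finset.set_biUnion_insert, Finset.sum_insert ha, ← ih]
    apply var_additive lam (h a) (𝒜.biUnion_mem s A fun i _ => h i)
    rw [Set.disjoint_iUnion₂_right]
    intro i hi
    exact hd (by rintro rfl; exact ha hi)

theorem var_of_nonneg (nu : BAMeasure 𝒜) (h : ∀ A ∈ 𝒜.sets, 0 ≤ nu.toFun A) {A : Set Ω}
    (hA : A ∈ 𝒜.sets) : var nu A = nu.toFun A := by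
  obtain ⟨M, hM⟩ := nu.bounded
  have h1 : supOn nu.toFun 𝒜.sets A = nu.toFun A := by
    apply le_antisymm
    · apply supOn_le 𝒜.empty_mem
      intro B hB hBA
      have h1 := nu.additive hB (𝒜.diff_mem hA hB) Set.disjoint_sdiff_right
      rw [Set.union_diff_cancel hBA] at h1
      linarith [h _ (𝒜.diff_mem hA hB)]
    · exact le_supOn (M := M) (fun B hB => (abs_le.1 (hM B hB)).2) hA subset_rfl
  have h2 : supOn (fun B => -nu.toFun B) 𝒜.sets A = 0 := by
    apply le_antisymm
    · apply supOn_le 𝒜.empty_mem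
      intro B hB hBA
      simpa using h B hB
    · have := le_supOn (u := fun B => -nu.toFun B) (I := 𝒜.sets) (M := M) (A := A)
        (fun B hB => neg_le.1 (abs_le.1 (hM B hB)).1) 𝒜.empty_mem (Set.empty_subset _)
      simpa [nu.map_empty] using this
  rw [var_eq, h1, h2, add_zero]

theorem outer_bdd (lam : BAMeasure 𝒜) (B : Set Ω) :
    BddBelow {x | ∃ A ∈ 𝒜.sets, B ⊆ A ∧ x = var lam A} :=
  ⟨0, by rintro x ⟨A, -, -, rfl⟩; exact var_nonneg lam A⟩

theorem outer_nonneg (lam : BAMeasure 𝒜) (B : Set Ω) : 0 ≤ outer lam B :=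
  Real.sInf_nonneg (by rintro x ⟨A, -, -, rfl⟩; exact var_nonneg lam A)

theorem outer_lt_iff (lam : BAMeasure 𝒜) {B : Set Ω} {ε : ℝ} :
    outer lam B < ε ↔ ∃ A ∈ 𝒜.sets, B ⊆ A ∧ var lam A < ε := by
  constructor
  · intro h
    obtain ⟨x, ⟨A, hA, hBA, rfl⟩, hx⟩ := exists_lt_of_csInf_lt
      (s := {x | ∃ A ∈ 𝒜.sets, B ⊆ A ∧ x = var lam A}) ⟨_, Set.univ, 𝒜.univ_mem, Set.subset_univ _, rfl⟩ h
    exact ⟨A, hA, hBA, hx⟩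
  · rintro ⟨A, hA, hBA, hx⟩
    exact csInf_lt_of_lt (outer_bdd lam B) ⟨A, hA, hBA, rfl⟩ hx

/-- `f` is smaller than `ε` outside of a set of measure smaller than `ε`. -/
def Small (lam : BAMeasure 𝒜) (f : Ω → ℝ) (ε : ℝ) : Prop :=
  ∃ A ∈ 𝒜.sets, var lam A < ε ∧ ∀ ω, ω ∉ A → |f ω| < ε

theorem Small.mono {lam : BAMeasure 𝒜} {f : Ω → ℝ} {ε η : ℝ} (h : Small lam f ε) (hε : ε ≤ η) :
    Small lam f η := by
  obtain ⟨A, hA, h1, h2⟩ := h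
  exact ⟨A, hA, h1.trans_le hε, fun ω hω => (h2 ω hω).trans_le hε⟩

theorem Small.add {lam : BAMeasure 𝒜} {f g : Ω → ℝ} {ε η : ℝ} (h : Small lam f ε)
    (h' : Small lam g η) : Small lam (f + g) (ε + η) := by
  obtain ⟨A, hA, h1, h2⟩ := h
  obtain ⟨B, hB, h3, h4⟩ := h'
  refine ⟨A ∪ B, 𝒜.union_mem hA hB, ?_, ?_⟩
  · linarith [var_union_le lam hA hB]
  · intro ω hω
    simp only [Set.mem_union, not_or] at hω
    have := abs_add_le (f ω) (g ω)
    simp only [Pi.add_apply]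
    linarith [h2 ω hω.1, h4 ω hω.2]

theorem Small.smul {lam : BAMeasure 𝒜} {f : Ω → ℝ} {ε a M : ℝ} (h : Small lam f ε)
    (hε : 0 < ε) (hM : 1 ≤ M) (ha : |a| ≤ M) : Small lam (a • f) (M * ε) := by
  obtain ⟨A, hA, h1, h2⟩ := h
  refine ⟨A, hA, by nlinarith, ?_⟩
  intro ω hω
  simp only [Pi.smul_apply, smul_eq_mul, abs_mul]
  have := h2 ω hω
  have h3 := abs_nonneg (f ω)
  calc |a| * |f ω| ≤ M * |f ω| := by gcongr
    _ < M * ε := by gcongr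

theorem small_of_d {lam : BAMeasure 𝒜} {f g : Ω → ℝ} {ε : ℝ} (h : dL0 lam f g < ε) :
    Small lam (f - g) ε := by
  obtain ⟨x, ⟨c, hc, rfl⟩, hx⟩ := exists_lt_of_csInf_lt
    (s := {x | ∃ c > (0:ℝ), x = c + outer lam {ω | c ≤ |f ω - g ω|}}) ⟨_, 1, one_pos, rfl⟩ h
  have h0 := outer_nonneg lam {ω | c ≤ |f ω - g ω|}
  obtain ⟨A, hA, hs, hv⟩ := (outer_lt_iff lam (ε := ε - c)).1 (by linarith)
  refine ⟨A, hA, by linarith, ?_⟩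
  intro ω hω
  have : ¬ c ≤ |f ω - g ω| := fun h => hω (hs h)
  simp only [Pi.sub_apply]
  linarith

theorem d_lt {lam : BAMeasure 𝒜} {f g : Ω → ℝ} {c η : ℝ} (hc : 0 < c) {A : Set Ω}
    (hA : A ∈ 𝒜.sets) (hv : var lam A < η) (h : ∀ ω, ω ∉ A → |f ω - g ω| < c) :
    dL0 lam f g < c + η := by
  apply csInf_lt_of_lt (a := c + outer lam {ω | c ≤ |f ω - g ω|})
  · exact ⟨0, by rintro x ⟨c, hc, rfl⟩; have := outer_nonneg lam {ω | c ≤ |f ω - g ω|}; linarith⟩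
  · exact ⟨c, hc, rfl⟩
  · have : outer lam {ω | c ≤ |f ω - g ω|} < η := by
      rw [outer_lt_iff]
      refine ⟨A, hA, ?_, hv⟩
      intro ω hω
      by_contra hn
      exact absurd (h ω hn) (not_lt.2 hω)
    linarith

theorem d_of_small {lam : BAMeasure 𝒜} {f g : Ω → ℝ} {ε : ℝ} (hε : 0 < ε)
    (h : Small lam (f - g) ε) : dL0 lam f g < 2 * ε := by
  obtain ⟨A, hA, h1, h2⟩ := h
  rw [two_mul]
  exact d_lt hε hA h1 h2

theorem IsSimple.add {f g : Ω → ℝ} (hf : IsSimple 𝒜 f) (hg : IsSimple 𝒜 g) :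
    IsSimple 𝒜 (f + g) := by
  constructor
  · apply (hf.1.add hg.1).subset
    rintro _ ⟨ω, rfl⟩
    exact Set.add_mem_add ⟨ω, rfl⟩ ⟨ω, rfl⟩
  · intro r
    have : (f + g) ⁻¹' {r} = ⋃ s ∈ hf.1.toFinset, (f ⁻¹' {s} ∩ g ⁻¹' {r - s}) := by
      ext ω
      simp only [Set.mem_preimage, Pi.add_apply, Set.mem_singleton_iff, Set.mem_iUnion,
        Set.mem_inter_iff, exists_prop, Set.Finite.mem_toFinset]
      constructor
      · intro h
        exact ⟨f ω, ⟨ω, rfl⟩, rfl, by linarith⟩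
      · rintro ⟨s, -, h1, h2⟩
        linarith
    rw [this]
    exact 𝒜.biUnion_mem _ _ fun s _ => 𝒜.inter_mem (hf.2 s) (hg.2 _)

theorem isSimple_indicator {A : Set Ω} (hA : A ∈ 𝒜.sets) (r : ℝ) :
    IsSimple 𝒜 (A.indicator fun _ => r) := by
  classical
  constructor
  · apply (Set.toFinite {0, r}).subset
    rintro _ ⟨ω, rfl⟩
    by_cases h : ω ∈ A <;> simp [h]
  · intro s
    rw [Set.indicator_const_preimage_eq_union]
    split_ifs <;>
    simp [𝒜.univ_mem, 𝒜.empty_mem, hA, 𝒜.compl_mem hA]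

theorem IsSimple.smul {f : Ω → ℝ} (hf : IsSimple 𝒜 f) (a : ℝ) : IsSimple 𝒜 (a • f) := by
  by_cases ha : a = 0
  · subst ha
    have := isSimple_indicator 𝒜.empty_mem 0
    rw [zero_smul]
    rw [Set.indicator_empty] at this
    exact this
  constructor
  · apply (hf.1.image (fun x => a * x)).subset
    rintro _ ⟨ω, rfl⟩
    exact ⟨f ω, ⟨ω, rfl⟩, rfl⟩
  · intro r
    convert hf.2 (a⁻¹ * r) using 1
    ext ω
    simp only [Set.mem_preimage, Pi.smul_apply, smul_eq_mul, Set.mem_singleton_iff]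
    constructor
    · rintro rfl; field_simp
    · intro h; rw [h]; field_simp

theorem mem_L0_iff {lam : BAMeasure 𝒜} {f : Ω → ℝ} :
    f ∈ L0 lam ↔ ∀ ε > (0:ℝ), ∃ s, IsSimple 𝒜 s ∧ Small lam (s - f) ε := by
  constructor
  · rintro ⟨s, hs, hc⟩ ε hε
    obtain ⟨n, hn⟩ := ((hc (ε / 2) (by linarith)).eventually_lt_const hε).exists
    obtain ⟨A, hA, h1, h2⟩ := (outer_lt_iff lam).1 hn
    refine ⟨s n, hs n, A, hA, h2, ?_⟩
    intro ω hω
    have : ¬ ε / 2 < |s n ω - f ω| := fun h => hω (h1 h)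
    simp only [Pi.sub_apply]
    linarith
  · intro h
    choose s hs hS using fun n : ℕ => h (1 / ((n:ℝ) + 1)) (by positivity)
    refine ⟨s, hs, ?_⟩
    intro c hc
    have hlim := tendsto_one_div_add_atTop_nhds_zero_nat (𝕜 := ℝ)
    apply squeeze_zero' (Eventually.of_forall fun n => outer_nonneg lam _) _ hlim
    filter_upwards [hlim.eventually_lt_const hc] with n hn
    obtain ⟨A, hA, h1, h2⟩ := hS n
    apply le_of_lt
    rw [outer_lt_iff]
    refine ⟨A, hA, ?_, h1⟩
    intro ω hω
    by_contra hnA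
    have h3 := h2 ω hnA
    simp only [Pi.sub_apply] at h3
    have h4 : c < |s n ω - f ω| := hω
    linarith

theorem Small.zero {lam : BAMeasure 𝒜} {ε : ℝ} (hε : 0 < ε) : Small lam 0 ε :=
  ⟨∅, 𝒜.empty_mem, by rwa [var_empty], by simpa using fun _ => hε⟩

theorem IsSimple.mem_L0 {lam : BAMeasure 𝒜} {f : Ω → ℝ} (hf : IsSimple 𝒜 f) : f ∈ L0 lam :=
  mem_L0_iff.2 fun ε hε => ⟨f, hf, by simpa using Small.zero hε⟩

theorem L0_add {lam : BAMeasure 𝒜} {f g : Ω → ℝ} (hf : f ∈ L0 lam) (hg : g ∈ L0 lam) :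
    f + g ∈ L0 lam := by
  rw [mem_L0_iff] at *
  intro ε hε
  obtain ⟨s, hs, h1⟩ := hf (ε / 2) (by linarith)
  obtain ⟨t, ht, h2⟩ := hg (ε / 2) (by linarith)
  refine ⟨s + t, hs.add ht, ?_⟩
  have := h1.add h2
  rw [add_halves] at this
  convert this using 1
  abel

theorem L0_smul {lam : BAMeasure 𝒜} {f : Ω → ℝ} (hf : f ∈ L0 lam) (a : ℝ) :
    a • f ∈ L0 lam := by
  rw [mem_L0_iff] at *
  intro ε hε
  have hp : 0 < |a| + 1 := by positivity
  obtain ⟨s, hs, h1⟩ := hf (ε / (|a| + 1)) (by positivity)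
  refine ⟨a • s, hs.smul a, ?_⟩
  have := h1.smul (a := a) (M := |a| + 1) (by positivity)
    (by linarith [abs_nonneg a]) (by linarith)
  rw [mul_div_cancel₀ _ hp.ne'] at this
  rwa [smul_sub] at this

theorem L0_convex (lam : BAMeasure 𝒜) : Convex ℝ (L0 lam) := by
  intro f hf g hg a b _ _ _
  exact L0_add (L0_smul hf a) (L0_smul hg b)

theorem L0_essBdd {lam : BAMeasure 𝒜} {f : Ω → ℝ} (hf : f ∈ L0 lam) {ε : ℝ} (hε : 0 < ε) :
    ∃ M : ℝ, 1 ≤ M ∧ ∃ A ∈ 𝒜.sets, var lam A < ε ∧ ∀ ω, ω ∉ A → |f ω| < M := by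
  obtain ⟨s, hs, A, hA, h1, h2⟩ := mem_L0_iff.1 hf ε hε
  obtain ⟨R, hR⟩ := (hs.1.image (fun x => |x|)).bddAbove
  refine ⟨max 1 (R + ε), le_max_left _ _, A, hA, h1, ?_⟩
  intro ω hω
  apply lt_of_lt_of_le _ (le_max_right _ _)
  have h3 : |s ω| ≤ R := hR ⟨s ω, ⟨ω, rfl⟩, rfl⟩
  have h4 := h2 ω hω
  simp only [Pi.sub_apply] at h4
  have h5 := abs_sub_abs_le_abs_sub (f ω) (s ω)
  rw [abs_sub_comm] at h5
  linarith

/-- Finite unions of sets of measure less than `δ`. -/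
def Idl (lam : BAMeasure 𝒜) (δ : ℝ) : Set (Set Ω) :=
  {B | ∃ F : Finset (Set Ω), (∀ A ∈ F, A ∈ 𝒜.sets ∧ var lam A < δ) ∧ B = ⋃ A ∈ F, A}

theorem Idl.mem {lam : BAMeasure 𝒜} {δ : ℝ} {B : Set Ω} (h : B ∈ Idl lam δ) : B ∈ 𝒜.sets := by
  obtain ⟨F, hF, rfl⟩ := h
  exact 𝒜.biUnion_mem F _ fun A hA => (hF A hA).1

theorem Idl.empty (lam : BAMeasure 𝒜) (δ : ℝ) : ∅ ∈ Idl lam δ := ⟨∅, by simp, by simp⟩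

theorem Idl.single {lam : BAMeasure 𝒜} {δ : ℝ} {A : Set Ω} (hA : A ∈ 𝒜.sets)
    (h : var lam A < δ) : A ∈ Idl lam δ :=
  ⟨{A}, by simpa using ⟨hA, h⟩, by simp⟩

theorem Idl.union {lam : BAMeasure 𝒜} {δ : ℝ} {B C : Set Ω} (hB : B ∈ Idl lam δ)
    (hC : C ∈ Idl lam δ) : B ∪ C ∈ Idl lam δ := by
  classical
  obtain ⟨F, hF, rfl⟩ := hB
  obtain ⟨G, hG, rfl⟩ := hC
  refine ⟨F ∪ G, ?_, ?_⟩
  · intro A hA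
    rcases Finset.mem_union.1 hA with h | h
    · exact hF A h
    · exact hG A h
  · rw [Finset.set_biUnion_union]

theorem Idl.inter {lam : BAMeasure 𝒜} {δ : ℝ} {B C : Set Ω} (hB : B ∈ Idl lam δ)
    (hC : C ∈ 𝒜.sets) : B ∩ C ∈ Idl lam δ := by
  classical
  obtain ⟨F, hF, rfl⟩ := hB
  refine ⟨F.image (fun A => A ∩ C), ?_, ?_⟩
  · intro A hA
    obtain ⟨A', hA', rfl⟩ := Finset.mem_image.1 hA
    have h := hF A' hA'
    have hm := 𝒜.inter_mem h.1 hC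
    exact ⟨hm, (var_mono lam hm h.1 Set.inter_subset_left).trans_lt h.2⟩
  · rw [Finset.set_biUnion_finset_image, Set.iUnion₂_inter]

theorem Idl.mono {lam : BAMeasure 𝒜} {δ η : ℝ} (h : δ ≤ η) : Idl lam δ ⊆ Idl lam η := by
  rintro B ⟨F, hF, rfl⟩
  exact ⟨F, fun A hA => ⟨(hF A hA).1, (hF A hA).2.trans_le h⟩, rfl⟩

/-- A finite partition of `B` into sets satisfying `P`. -/
def HasPart (𝒜 : SetAlg Ω) (P : Set Ω → Prop) (B : Set Ω) : Prop :=
  ∃ (N : ℕ) (A : Fin N → Set Ω), (∀ n, A n ∈ 𝒜.sets) ∧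
    Pairwise (Function.onFun Disjoint A) ∧ (⋃ n, A n) = B ∧ ∀ n, P (A n)

theorem HasPart.extend {P : Set Ω → Prop} {B C : Set Ω} (h : HasPart 𝒜 P B) (hC : C ∈ 𝒜.sets)
    (hP : P C) (hd : Disjoint C B) : HasPart 𝒜 P (C ∪ B) := by
  obtain ⟨N, A, h1, h2, h3, h4⟩ := h
  have h5 : ∀ n, Disjoint C (A n) := fun n => hd.mono_right (h3 ▸ Set.subset_iUnion A n)
  refine ⟨N + 1, Fin.cons C A, ?_, ?_, ?_, ?_⟩
  · intro n; refine Fin.cases ?_ (fun i => ?_) n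
    · simpa using hC
    · simpa using h1 i
  · intro i j
    refine Fin.cases ?_ (fun i => ?_) i <;> refine Fin.cases ?_ (fun j => ?_) j
    · intro h; exact absurd rfl h
    · intro _; simpa [Function.onFun] using h5 j
    · intro _; simpa [Function.onFun] using (h5 i).symm
    · intro h
      simpa [Function.onFun] using h2 (fun e => h (by rw [e]))
  · rw [← h3]
    ext ω
    simp [Fin.exists_fin_succ]
  · intro n; refine Fin.cases ?_ (fun i => ?_) n
    · simpa using hP
    · simpa using h4 i

theorem Idl.hasPart {lam : BAMeasure 𝒜} {δ : ℝ} {B : Set Ω} (h : B ∈ Idl lam δ) :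
    HasPart 𝒜 (fun A => var lam A < δ) B := by
  classical
  obtain ⟨F, hF, rfl⟩ := h
  induction F using Finset.induction_on with
  | empty => exact ⟨0, fun _ => ∅, fun n => n.elim0, fun n => n.elim0, by simp, fun n => n.elim0⟩
  | insert a s ha ih =>
    have h1 := hF a (by simp)
    have h2 : ∀ A ∈ s, A ∈ 𝒜.sets ∧ var lam A < δ := fun A hA => hF A (by simp [hA])
    have h3 := 𝒜.biUnion_mem s _ fun A hA => (h2 A hA).1
    rw [Finset.set_biUnion_insert, ← Set.diff_union_self]
    have hm := 𝒜.diff_mem h1.1 h3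
    exact (ih h2).extend hm ((var_mono lam hm h1.1 Set.diff_subset).trans_lt h1.2)
      Set.disjoint_sdiff_left

/-- Finite unions of sets of small measure have small measure. -/
def DD (lam : BAMeasure 𝒜) : Prop :=
  ∀ ε > (0:ℝ), ∃ δ > (0:ℝ), ∀ B ∈ Idl lam δ, var lam B < ε

theorem DD.sd {lam : BAMeasure 𝒜} (h : DD lam) : StronglyDiscontinuous lam := by
  classical
  intro nu hnu ε hε
  obtain ⟨δ, hδ, hI⟩ := h ε hε
  have hV := var_nonneg lam Set.univ
  set V := var lam Set.univ with hVdef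
  obtain ⟨N, A, h1, h2, h3, h4⟩ := hnu (δ * ε / (V + 1)) (by positivity)
  set S := Finset.univ.filter (fun n => δ ≤ var lam (A n)) with hS
  set T := Finset.univ.filter (fun n => var lam (A n) < δ) with hT
  have hTm := 𝒜.biUnion_mem T A fun i _ => h1 i
  have hSm := 𝒜.biUnion_mem S A fun i _ => h1 i
  refine ⟨⋃ n ∈ T, A n, hTm, ?_, ?_⟩
  · apply hI
    refine ⟨T.image A, ?_, ?_⟩
    · intro B hB
      obtain ⟨n, hn, rfl⟩ := Finset.mem_image.1 hB
      exact ⟨h1 n, (Finset.mem_filter.1 hn).2⟩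
    · rw [Finset.set_biUnion_finset_image]
  · have hsub : (⋃ n ∈ T, A n)ᶜ ⊆ ⋃ n ∈ S, A n := by
      intro ω hω
      have : ω ∈ ⋃ n, A n := by rw [h3]; trivial
      obtain ⟨n, hn⟩ := Set.mem_iUnion.1 this
      simp only [Set.mem_iUnion]
      refine ⟨n, ?_, hn⟩
      by_contra hc
      apply hω
      simp only [Set.mem_iUnion]
      refine ⟨n, ?_, hn⟩
      simp only [hS, hT, Finset.mem_filter, Finset.mem_univ, true_and, not_le] at hc ⊢
      exact hc
    have k1 := var_mono nu (𝒜.compl_mem hTm) hSm hsub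
    rw [var_biUnion nu S A h1 h2] at k1
    have k2 : ∑ i ∈ S, var nu (A i) ≤ S.card * (δ * ε / (V + 1)) := by
      rw [← nsmul_eq_mul]
      exact Finset.sum_le_card_nsmul _ _ _ fun i _ => (h4 i).le
    have k3 : S.card * δ ≤ V := by
      have := var_mono lam hSm 𝒜.univ_mem (Set.subset_univ _)
      rw [var_biUnion lam S A h1 h2] at this
      refine le_trans ?_ this
      rw [← nsmul_eq_mul]
      exact Finset.card_nsmul_le_sum _ _ _ fun i hi => (Finset.mem_filter.1 hi).2
    have k4 : S.card * (δ * ε / (V + 1)) < ε := by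
      rw [← mul_div_assoc, div_lt_iff₀ (by positivity)]
      nlinarith
    linarith

theorem DD.conv {lam : BAMeasure 𝒜} {δ c : ℝ} :
    Convex ℝ {f : Ω → ℝ | ∃ B ∈ Idl lam δ, ∀ ω, ω ∉ B → |f ω| ≤ c} := by
  rintro f ⟨B, hB, h1⟩ g ⟨C, hC, h2⟩ a b ha hb hab
  refine ⟨B ∪ C, Idl.union hB hC, ?_⟩
  intro ω hω
  simp only [Set.mem_union, not_or] at hω
  have k1 := h1 ω hω.1
  have k2 := h2 ω hω.2
  simp only [Pi.add_apply, Pi.smul_apply, smul_eq_mul]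
  calc |a * f ω + b * g ω| ≤ |a * f ω| + |b * g ω| := abs_add_le _ _
    _ = a * |f ω| + b * |g ω| := by rw [abs_mul, abs_mul, abs_of_nonneg ha, abs_of_nonneg hb]
    _ ≤ a * c + b * c := by gcongr
    _ = c := by rw [← add_mul, hab, one_mul]

theorem DD.bdd {lam : BAMeasure 𝒜} (h : DD lam) (K : Set (Ω → ℝ)) (hK : BddL0 lam K) :
    BddL0 lam (convexHull ℝ K) := by
  intro ε hε
  obtain ⟨δ, hδ, hI⟩ := h ε hε
  obtain ⟨c₀, hc⟩ := hK δ hδ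
  refine ⟨c₀, fun c hcc f hf => ?_⟩
  have hsub : K ⊆ {f : Ω → ℝ | ∃ B ∈ Idl lam δ, ∀ ω, ω ∉ B → |f ω| ≤ c} := by
    intro g hg
    obtain ⟨A, hA, h1, h2⟩ := (outer_lt_iff lam).1 (hc c hcc g hg)
    exact ⟨A, Idl.single hA h2, fun ω hω => not_lt.1 fun hh => hω (h1 hh)⟩
  obtain ⟨B, hB, h1⟩ := convexHull_min hsub DD.conv hf
  rw [outer_lt_iff]
  refine ⟨B, (Idl.mem hB), ?_, hI B hB⟩
  intro ω hω
  by_contra hn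
  exact absurd (h1 ω hn) (not_le.2 hω)

theorem DD.lctvs {lam : BAMeasure 𝒜} (h : DD lam) : IsLCTVS lam := by
  refine ⟨?_, ?_, ?_⟩
  · intro f hf a ε hε
    obtain ⟨M, hM, A, hA, h1, h2⟩ := L0_essBdd hf (ε := ε / 8) (by linarith)
    have hp : 0 < |a| + 1 := by positivity
    refine ⟨min 1 (min (ε / (8 * M)) (ε / (8 * (|a| + 1)))), by positivity, ?_⟩
    intro g hg b hd hb
    set δ := min 1 (min (ε / (8 * M)) (ε / (8 * (|a| + 1)))) with hδ
    have hδ0 : 0 < δ := by positivity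
    have d1 : δ ≤ 1 := min_le_left _ _
    have d2 : δ * M ≤ ε / 8 := by
      have : δ ≤ ε / (8 * M) := (min_le_right _ _).trans (min_le_left _ _)
      rw [le_div_iff₀ (by positivity)] at this
      linarith
    have d3 : (|a| + 1) * δ ≤ ε / 8 := by
      have : δ ≤ ε / (8 * (|a| + 1)) := (min_le_right _ _).trans (min_le_right _ _)
      rw [le_div_iff₀ (by positivity)] at this
      linarith
    have hba : |b| ≤ |a| + 1 := by
      have := abs_sub_abs_le_abs_sub b a
      linarith
    have s1 : Small lam (b • (g - f)) (ε / 8) :=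
      ((small_of_d hd).smul hδ0 (by linarith [abs_nonneg a]) hba).mono d3
    have s2 : Small lam ((b - a) • f) (ε / 8) := by
      refine ⟨A, hA, h1, fun ω hω => ?_⟩
      simp only [Pi.smul_apply, smul_eq_mul, abs_mul]
      exact (mul_lt_mul'' hb (h2 ω hω) (abs_nonneg _) (abs_nonneg _)).trans_le d2
    have s3 := s1.add s2
    have e : b • (g - f) + (b - a) • f = b • g - a • f := by
      rw [smul_sub, sub_smul]; abel
    rw [e] at s3
    have := d_of_small (by linarith) s3
    linarith
  · intro f hf g hg ε hε
    refine ⟨ε / 4, by linarith, ?_⟩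
    intro f' hf' g' hg' h1 h2
    have s := (small_of_d h1).add (small_of_d h2)
    have e : f' - f + (g' - g) = (f' + g') - (f + g) := by abel
    rw [e] at s
    have := d_of_small (by linarith) s
    linarith
  · intro ε hε
    obtain ⟨δ, hδ, hI⟩ := h (ε / 2) (by linarith)
    set η := min δ (ε / 4) with hη
    have hη0 : 0 < η := by positivity
    have hsub : convexHull ℝ {f ∈ L0 lam | dL0 lam f 0 < η} ⊆ L0 lam :=
      convexHull_min (fun f hf => hf.1) (L0_convex lam)
    refine ⟨convexHull ℝ {f ∈ L0 lam | dL0 lam f 0 < η}, hsub, convex_convexHull ℝ _,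
      ⟨η, hη0, subset_convexHull ℝ _⟩, ?_⟩
    intro f hf
    refine ⟨hsub hf, ?_⟩
    have hsub2 : {f ∈ L0 lam | dL0 lam f 0 < η} ⊆
        {f : Ω → ℝ | ∃ B ∈ Idl lam δ, ∀ ω, ω ∉ B → |f ω| ≤ ε / 4} := by
      rintro g ⟨-, hg⟩
      obtain ⟨A, hA, h1, h2⟩ := small_of_d hg
      refine ⟨A, Idl.single hA (h1.trans_le (min_le_left _ _)), fun ω hω => ?_⟩
      have := h2 ω hω
      simp only [sub_zero] at this
      exact this.le.trans (min_le_right _ _)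
    obtain ⟨B, hB, h1⟩ := convexHull_min hsub2 DD.conv hf
    have := d_lt (lam := lam) (f := f) (g := 0) (c := ε / 2) (η := ε / 2) (by linarith) (Idl.mem hB)
      (hI B hB) (fun ω hω => by
        have := h1 ω hω
        simp only [Pi.zero_apply, sub_zero]
        linarith)
    linarith

/-- The averages of the scaled indicators. -/
theorem avg_mem {C : Set (Ω → ℝ)} (hC : Convex ℝ C) (F : Finset (Set Ω)) (hF : F.Nonempty) (r : ℝ)
    (h : ∀ A ∈ F, (A.indicator fun _ => (F.card : ℝ) * r) ∈ C) :
    (∑ A ∈ F, A.indicator fun _ => r) ∈ C := by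
  have hc : (F.card : ℝ) ≠ 0 := by simpa using hF.ne_empty
  have := hC.sum_mem (t := F) (w := fun _ => (F.card : ℝ)⁻¹)
    (z := fun A => A.indicator fun _ => (F.card : ℝ) * r) (fun _ _ => by positivity)
    (by simp [hc]) h
  convert this using 1
  apply Finset.sum_congr rfl
  intro A _
  ext ω
  by_cases hω : ω ∈ A <;> simp [hω, hc]

theorem le_avg (F : Finset (Set Ω)) {r : ℝ} (hr : 0 ≤ r) {ω : Ω} (hω : ω ∈ ⋃ A ∈ F, A) :
    r ≤ |(∑ A ∈ F, A.indicator fun _ => r) ω| := by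
  simp only [Set.mem_iUnion] at hω
  obtain ⟨A, hA, hωA⟩ := hω
  rw [Finset.sum_apply]
  refine le_trans ?_ (le_abs_self _)
  have := Finset.single_le_sum (f := fun A : Set Ω => A.indicator (fun _ => r) ω) (s := F)
    (fun B _ => Set.indicator_nonneg (fun _ _ => hr) ω) hA
  simpa [hωA] using this

theorem dd_of_lctvs {lam : BAMeasure 𝒜} (h : IsLCTVS lam) : DD lam := by
  intro ε hε
  obtain ⟨C, -, hC, ⟨δ, hδ, h1⟩, h2⟩ := h.2.2 (min ε 1) (by positivity)
  refine ⟨δ / 2, by linarith, ?_⟩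
  rintro B ⟨F, hF, hB⟩
  have hBm : B ∈ 𝒜.sets := Idl.mem ⟨F, hF, hB⟩
  rcases F.eq_empty_or_nonempty with rfl | hne
  · simp only [Finset.notMem_empty, Set.iUnion_of_empty, Set.iUnion_empty] at hB
    rw [hB, var_empty]; exact hε
  have hmem := avg_mem hC F hne 1 (by
    intro A hA
    apply h1
    refine ⟨(isSimple_indicator (hF A hA).1 _).mem_L0, ?_⟩
    have := d_lt (lam := lam) (f := A.indicator fun _ => (F.card : ℝ) * 1) (g := 0)
      (c := δ / 2) (by linarith) (hF A hA).1 (hF A hA).2 (fun ω hω => by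
        simp only [Set.indicator_of_notMem hω, Pi.zero_apply, sub_zero, abs_zero]; linarith)
    linarith)
  obtain ⟨A, hA, k1, k2⟩ := small_of_d (h2 hmem).2
  refine (var_mono lam hBm hA ?_).trans_lt (k1.trans_le (min_le_left _ _))
  intro ω hω
  by_contra hn
  have k3 := k2 ω hn
  rw [hB] at hω
  have k4 := le_avg F (r := 1) zero_le_one hω
  simp only [sub_zero] at k3
  linarith [min_le_right ε 1]

theorem dd_of_bdd {lam : BAMeasure 𝒜}
    (h : ∀ K : Set (Ω → ℝ), K ⊆ L0 lam → BddL0 lam K → BddL0 lam (convexHull ℝ K)) : DD lam := by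
  by_contra hD
  unfold DD at hD
  push Not at hD
  obtain ⟨ε, hε, hD⟩ := hD
  choose B hB hv using fun n : ℕ => hD (1 / ((n:ℝ) + 1)) (by positivity)
  choose F hF hBF using hB
  have hne : ∀ n, (F n).Nonempty := by
    intro n
    rw [Finset.nonempty_iff_ne_empty]
    intro h0
    have h1 := hBF n
    rw [h0] at h1
    simp only [Finset.notMem_empty, Set.iUnion_of_empty, Set.iUnion_empty] at h1
    have h2 := hv n
    rw [h1, var_empty] at h2
    linarith
  let K : Set (Ω → ℝ) := {f | ∃ n : ℕ, ∃ A ∈ F n,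
    f = A.indicator fun _ => ((F n).card : ℝ) * ((n : ℝ) + 1)}
  have hKL : K ⊆ L0 lam := by
    rintro f ⟨n, A, hA, rfl⟩
    exact (isSimple_indicator (hF n A hA).1 _).mem_L0
  have hKb : BddL0 lam K := by
    intro η hη
    obtain ⟨n₀, hn₀⟩ := exists_nat_one_div_lt hη
    obtain ⟨R, hR⟩ := ((Finset.range n₀).image
      (fun n => ((F n).card : ℝ) * ((n : ℝ) + 1))).bddAbove
    refine ⟨max R 0, ?_⟩
    rintro c hc f ⟨n, A, hA, rfl⟩
    have hc0 : 0 ≤ c := (le_max_right _ _).trans hc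
    rw [outer_lt_iff]
    by_cases hn : n < n₀
    · refine ⟨∅, 𝒜.empty_mem, ?_, by rwa [var_empty]⟩
      intro ω hω
      exfalso
      have h1 : ((F n).card : ℝ) * ((n : ℝ) + 1) ≤ R :=
        hR (Finset.mem_coe.2 (Finset.mem_image_of_mem _ (Finset.mem_range.2 hn)))
      have h2 : ((F n).card : ℝ) * ((n : ℝ) + 1) ≤ c := h1.trans ((le_max_left _ _).trans hc)
      have h3 : (0:ℝ) ≤ ((F n).card : ℝ) * ((n : ℝ) + 1) := by positivity
      have h4 : c < |A.indicator (fun _ => ((F n).card : ℝ) * ((n : ℝ) + 1)) ω| := hω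
      by_cases hωA : ω ∈ A
      · rw [Set.indicator_of_mem hωA, abs_of_nonneg h3] at h4
        linarith
      · rw [Set.indicator_of_notMem hωA, abs_zero] at h4
        linarith
    · refine ⟨A, (hF n A hA).1, ?_, ?_⟩
      · intro ω hω
        by_contra hωA
        have h4 : c < |A.indicator (fun _ => ((F n).card : ℝ) * ((n : ℝ) + 1)) ω| := hω
        rw [Set.indicator_of_notMem hωA, abs_zero] at h4
        linarith
      · refine (hF n A hA).2.trans_le (le_trans ?_ hn₀.le)
        have : (n₀ : ℝ) ≤ n := by exact_mod_cast not_lt.1 hn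
        gcongr
  obtain ⟨c₀, hc₀⟩ := h K hKL hKb ε hε
  obtain ⟨n, hn⟩ := exists_nat_ge c₀
  have hmem := avg_mem (convex_convexHull ℝ K) (F n) (hne n) ((n:ℝ) + 1) (by
    intro A hA
    exact subset_convexHull ℝ K ⟨n, A, hA, rfl⟩)
  obtain ⟨A, hA, h1, h2⟩ := (outer_lt_iff lam).1 (hc₀ n hn _ hmem)
  have h3 : B n ⊆ A := by
    intro ω hω
    apply h1
    rw [hBF n] at hω
    have := le_avg (F n) (r := (n:ℝ) + 1) (by positivity) hω
    simp only [Set.mem_ofPred_eq]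
    linarith
  have hBm : B n ∈ 𝒜.sets := Idl.mem ⟨F n, hF n, hBF n⟩
  linarith [var_mono lam hBm hA h3, hv n]

theorem dd_of_sd {lam : BAMeasure 𝒜} (h : StronglyDiscontinuous lam) : DD lam := by
  by_contra hD
  unfold DD at hD
  push Not at hD
  obtain ⟨ε, hε, hD⟩ := hD
  let W : ℕ → Set Ω → ℝ := fun n A => supOn (var lam) (Idl lam (1 / ((n:ℝ) + 1))) A
  have hbd : ∀ δ : ℝ, ∀ B ∈ Idl lam δ, var lam B ≤ var lam Set.univ := fun δ B hB =>
    var_mono lam (Idl.mem hB) 𝒜.univ_mem (Set.subset_univ _)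
  have hW0 : ∀ n A, 0 ≤ W n A := by
    intro n A
    have := le_supOn (hbd (1 / ((n:ℝ) + 1))) (Idl.empty lam _) (Set.empty_subset A)
    rwa [var_empty] at this
  have hWv : ∀ n, ∀ A ∈ 𝒜.sets, W n A ≤ var lam A := fun n A hA =>
    supOn_le (Idl.empty lam _) fun B hB hBA => var_mono lam (Idl.mem hB) hA hBA
  have hWanti : ∀ A, Antitone fun n => W n A := by
    intro A m n hmn
    apply supOn_le (Idl.empty lam _)
    intro B hB hBA
    refine le_supOn (hbd _) (Idl.mono ?_ hB) hBA
    have : (m : ℝ) ≤ n := by exact_mod_cast hmn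
    gcongr
  have hWadd : ∀ n, ∀ A ∈ 𝒜.sets, ∀ B ∈ 𝒜.sets, Disjoint A B → W n (A ∪ B) = W n A + W n B := by
    intro n A hA B hB hd
    exact supOn_additive (𝒜 := 𝒜) (hbd _) (Idl.empty lam _) (fun B hB => (Idl.mem hB))
      (fun B hB C hC => Idl.inter hB hC) (fun B hB C hC => Idl.union hB hC)
      (fun A B hA hB hd => var_additive lam hA hB hd) hA hB hd
  have hbb : ∀ A, BddBelow (Set.range fun n => W n A) := fun A =>
    ⟨0, by rintro _ ⟨n, rfl⟩; exact hW0 n A⟩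
  have hlim : ∀ A, Tendsto (fun n => W n A) atTop (𝓝 (⨅ n, W n A)) := fun A =>
    tendsto_atTop_ciInf (hWanti A) (hbb A)
  have hn0 : ∀ A, 0 ≤ ⨅ n, W n A := fun A => le_ciInf fun n => hW0 n A
  have hnW : ∀ n A, ⨅ n, W n A ≤ W n A := fun n A => ciInf_le (hbb A) n
  have hnv : ∀ A ∈ 𝒜.sets, ⨅ n, W n A ≤ var lam A := fun A hA => (hnW 0 A).trans (hWv 0 A hA)
  let nu : BAMeasure 𝒜 :=
    { toFun := fun A => ⨅ n, W n A
      map_empty := le_antisymm ((hnv ∅ 𝒜.empty_mem).trans (var_empty lam).le) (hn0 ∅)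
      additive := by
        intro A B hA hB hd
        refine tendsto_nhds_unique (hlim (A ∪ B)) ?_
        have := (hlim A).add (hlim B)
        refine this.congr fun n => ?_
        exact (hWadd n A hA B hB hd).symm
      bounded := ⟨var lam Set.univ, fun A hA => by
        rw [abs_of_nonneg (hn0 A)]
        exact (hnv A hA).trans (var_mono lam hA 𝒜.univ_mem (Set.subset_univ _))⟩ }
  have hvar : ∀ A ∈ 𝒜.sets, var nu A = ⨅ n, W n A := fun A hA =>
    var_of_nonneg nu (fun A _ => hn0 A) hA
  have hsc : StronglyContinuous nu := by
    intro η hη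
    obtain ⟨n, hn⟩ := exists_nat_one_div_lt hη
    have hlt : W n Set.univ - η < W n Set.univ := by linarith
    obtain ⟨x, ⟨B, hB, -, rfl⟩, hx⟩ := exists_lt_of_lt_csSup
      (s := {x | ∃ B ∈ Idl lam (1 / ((n:ℝ) + 1)), B ⊆ Set.univ ∧ x = var lam B}) (⟨_, ∅, Idl.empty lam _, Set.empty_subset _, rfl⟩) hlt
    have h1 : HasPart 𝒜 (fun A => var nu A < η) B := by
      obtain ⟨N, A, k1, k2, k3, k4⟩ := Idl.hasPart hB
      refine ⟨N, A, k1, k2, k3, fun i => ?_⟩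
      have := hnv (A i) (k1 i)
      have k5 := k4 i
      change var nu (A i) < η
      rw [hvar _ (k1 i)]
      simp only at k5
      linarith
    have hBc := 𝒜.compl_mem (Idl.mem hB)
    have h2 : var nu Bᶜ < η := by
      rw [hvar _ hBc]
      have k1 := hWadd n B (Idl.mem hB) Bᶜ hBc disjoint_compl_right
      rw [Set.union_compl_self] at k1
      have k2 : var lam B ≤ W n B := le_supOn (hbd _) hB subset_rfl
      have k3 := hnW n Bᶜ
      linarith
    have h3 := h1.extend hBc h2 disjoint_compl_left
    rw [Set.compl_union_self] at h3
    exact h3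
  obtain ⟨A, hA, h1, h2⟩ := h nu hsc (ε / 2) (by linarith)
  have hAc := 𝒜.compl_mem hA
  have h3 : ε ≤ ⨅ n, W n Set.univ := by
    apply le_ciInf
    intro n
    obtain ⟨B, hB, hv⟩ := hD (1 / ((n:ℝ) + 1)) (by positivity)
    exact hv.trans (le_supOn (hbd _) hB (Set.subset_univ _))
  have h4 := var_additive nu hA hAc disjoint_compl_right
  rw [Set.union_compl_self, hvar _ 𝒜.univ_mem, hvar _ hA] at h4
  linarith [hnv A hA]

/-- Theorem 12: the following are equivalent: (i) the convex hull of every bounded subset of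
`L⁰(λ)` is bounded in `L⁰(λ)`; (ii) `λ` is strongly discontinuous; (iii) `L⁰(λ)` is a
locally convex topological vector space. -/
theorem stmt_7 {Ω : Type*} {𝒜 : SetAlg Ω} (lam : BAMeasure 𝒜) :
    List.TFAE [
      ∀ K : Set (Ω → ℝ), K ⊆ L0 lam → BddL0 lam K → BddL0 lam (convexHull ℝ K),
      StronglyDiscontinuous lam,
      IsLCTVS lam] := by
  have h1 : (∀ K : Set (Ω → ℝ), K ⊆ L0 lam → BddL0 lam K → BddL0 lam (convexHull ℝ K)) ↔ DD lam :=
    ⟨dd_of_bdd, fun h K _ hK => h.bdd K hK⟩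
  have h2 : StronglyDiscontinuous lam ↔ DD lam := ⟨dd_of_sd, DD.sd⟩
  have h3 : IsLCTVS lam ↔ DD lam := ⟨dd_of_lctvs, DD.lctvs⟩
  tfae_have 1 ↔ 2 := h1.trans h2.symm
  tfae_have 2 ↔ 3 := h2.trans h3.symm
  tfae_finish

end FA
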